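/- Let U ⊆ ℂ³ be a connected open set and P, Q, A₂, A₃ : U → ℂ holomorphic, with Q not identically zero and A₂ not identically zero on U. Assume the tangency identity P·A₂ + Q·A₃ = 0 holds on U (this is ω(X_{P,Q}) = 0 for ω with first coefficient A₁ ≡ 0), and assume the integrability identity for ω = (0, A₂, A₃), namely A₃·∂₁A₂ − A₂·∂₁A₃ = 0 on U. Then Q·∂₁P − P·∂₁Q = 0 on U; i.e. the quotient P/Q does not depend on the variable x₁ wherever it is defined. -/

import Mathlib

/-- Partial derivative with respect to the first coordinate on ℂ³. -/
noncomputable def d1 (f : ℂ × ℂ × ℂ → ℂ) (p : ℂ × ℂ × ℂ) : ℂ :=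
  deriv (fun z => f (z, p.2.1, p.2.2)) p.1

/-- Partial derivative with respect to the second coordinate on ℂ³. -/
noncomputable def d2 (f : ℂ × ℂ × ℂ → ℂ) (p : ℂ × ℂ × ℂ) : ℂ :=
  deriv (fun z => f (p.1, z, p.2.2)) p.2.1

/-- Partial derivative with respect to the third coordinate on ℂ³. -/
noncomputable def d3 (f : ℂ × ℂ × ℂ → ℂ) (p : ℂ × ℂ × ℂ) : ℂ :=
  deriv (fun z => f (p.1, p.2.1, z)) p.2.2

/-- The coefficient of `ω ∧ dω` for `ω = A₁dx₁ + A₂dx₂ + A₃dx₃`; the integrability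
condition `ω ∧ dω = 0` says this vanishes. -/
noncomputable def wedgeCoeff (A₁ A₂ A₃ : ℂ × ℂ × ℂ → ℂ) (p : ℂ × ℂ × ℂ) : ℂ :=
  A₁ p * (d2 A₃ p - d3 A₂ p) + A₂ p * (d3 A₁ p - d1 A₃ p) + A₃ p * (d1 A₂ p - d2 A₁ p)

/-!
Differentiating `P * A₂ + Q * A₃ = 0` along `x₁` and eliminating gives
`A₂ ^ 2 * (Q * ∂₁P - P * ∂₁Q) = Q ^ 2 * (A₃ * ∂₁A₂ - A₂ * ∂₁A₃)`, whose right-hand side vanishes by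
integrability. Since `A₂` is holomorphic and not identically zero, it vanishes on no nonempty open
subset of `U`, and `Q * ∂₁P - P * ∂₁Q` is continuous, so the latter is zero everywhere. Nothing is
special about `ℂ³` and `x₁`: the argument takes place in a complex normed space and uses the
derivative along a fixed vector.
-/

open Filter Metric Set Topology

section ProductRule

variable {𝕜 E A : Type*} [NontriviallyNormedField 𝕜]

theorem hasLineDerivAt_mul [AddCommGroup E] [Module 𝕜 E] [NormedRing A] [NormedAlgebra 𝕜 A]
    {f g : E → A} {f' g' : A} {x v : E} (hf : HasLineDerivAt 𝕜 f f' x v)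
    (hg : HasLineDerivAt 𝕜 g g' x v) : HasLineDerivAt 𝕜 (f * g) (f' * g x + f x * g') x v := by
  have hmul := HasDerivAt.mul hf hg
  simp only [zero_smul, add_zero] at hmul
  exact hmul

theorem sq_mul_wronskian_eq_of_mul_add_mul_eventuallyEq_zero [NormedAddCommGroup E]
    [NormedSpace 𝕜 E] [NormedCommRing A] [NormedAlgebra 𝕜 A] {p q a b : E → A} {p' q' a' b' : A}
    {x v : E} (hp : HasLineDerivAt 𝕜 p p' x v) (hq : HasLineDerivAt 𝕜 q q' x v)
    (ha : HasLineDerivAt 𝕜 a a' x v) (hb : HasLineDerivAt 𝕜 b b' x v)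
    (h : p * a + q * b =ᶠ[𝓝 x] 0) :
    a x ^ 2 * (q x * p' - p x * q') = q x ^ 2 * (b x * a' - a x * b') := by
  have hvalue : p x * a x + q x * b x = 0 := h.self_of_nhds
  have hderiv : p' * a x + p x * a' + (q' * b x + q x * b') = 0 := by
    have hsum : HasLineDerivAt 𝕜 (p * a + q * b) _ x v :=
      HasDerivAt.add (hasLineDerivAt_mul hp ha) (hasLineDerivAt_mul hq hb)
    have hzero : HasLineDerivAt 𝕜 (0 : E → A) 0 x v := hasDerivAt_const 0 0
    exact hsum.unique (hzero.congr_of_eventuallyEq h)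
  linear_combination (q x * a x) * hderiv - (q' * a x + q x * a') * hvalue

end ProductRule

section Holomorphic

variable {E F G : Type*} [NormedAddCommGroup E] [NormedSpace ℂ E] [NormedAddCommGroup F]
  [NormedSpace ℂ F] [CompleteSpace F] [NormedAddCommGroup G] [NormedSpace ℂ G] {U : Set E}

-- Joint continuity makes the restrictions of `f` to parallel lines converge locally uniformly, and
-- by Weierstrass their derivatives converge as well.
theorem continuousOn_lineDeriv_of_differentiableOn {f : E → F} (hU : IsOpen U)
    (hf : DifferentiableOn ℂ f U) (v : E) : ContinuousOn (fun x => lineDeriv ℂ f x v) U := by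
  intro x hx
  refine ContinuousAt.continuousWithinAt ?_
  have hline : Continuous fun y : E × ℂ => y.1 + y.2 • v := by fun_prop
  obtain ⟨V, D, hV, hxV, hD, h0D, hVD⟩ : ∃ V D, IsOpen V ∧ x ∈ V ∧ IsOpen D ∧ (0 : ℂ) ∈ D ∧
      V ×ˢ D ⊆ (fun y : E × ℂ => y.1 + y.2 • v) ⁻¹' U :=
    mem_nhds_prod_iff'.1 ((hU.preimage hline).mem_nhds (by simpa using hx))
  have hdiff : ∀ᶠ y in 𝓝 x, DifferentiableOn ℂ (fun t : ℂ => f (y + t • v)) D := by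
    filter_upwards [hV.mem_nhds hxV] with y hy
    exact hf.comp (by fun_prop) fun t ht => hVD (mk_mem_prod hy ht)
  have hunif : TendstoLocallyUniformlyOn (fun y (t : ℂ) => f (y + t • v))
      (fun t => f (x + t • v)) (𝓝 x) D := by
    refine hD.tendstoLocallyUniformlyOn_iff_forall_tendsto.2 fun t ht => ?_
    have hft : ContinuousAt f (x + t • v) :=
      hf.continuousOn.continuousAt (hU.mem_nhds (hVD (mk_mem_prod hxV ht)))
    have hfixed : ContinuousAt (fun y : E × ℂ => f (x + y.2 • v)) (x, t) :=
      hft.comp_of_eq (by fun_prop) rfl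
    have hmoving : ContinuousAt (fun y : E × ℂ => f (y.1 + y.2 • v)) (x, t) :=
      hft.comp_of_eq (by fun_prop) rfl
    rw [← nhds_prod_eq]
    exact (hfixed.prodMk hmoving).tendsto.mono_right (nhds_le_uniformity _)
  exact (hunif.deriv hdiff hD).tendsto_at h0D

theorem eqOn_zero_of_convex_of_eventuallyEq_zero {f : E → F} (hU : IsOpen U) (hUc : Convex ℝ U)
    (hf : DifferentiableOn ℂ f U) {z : E} (hz : z ∈ U) (hfz : f =ᶠ[𝓝 z] 0) : EqOn f 0 U := by
  intro x hx
  let line : ℂ → E := fun t => z + t • (x - z)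
  have hline : Differentiable ℂ line := by fun_prop
  have hline0 : line 0 = z := by simp [line]
  have hline1 : line 1 = x := by simp [line]
  have hconvex : Convex ℝ (line ⁻¹' U) :=
    (hUc.translate_preimage_right z).linear_preimage
      ((LinearMap.toSpanSingleton ℂ E (x - z)).restrictScalars ℝ)
  have hanalytic : AnalyticOnNhd ℂ (f ∘ line) (line ⁻¹' U) :=
    (hf.comp hline.differentiableOn (mapsTo_preimage _ _)).analyticOnNhd
      (hU.preimage hline.continuous)
  have hzero : f ∘ line =ᶠ[𝓝 0] 0 :=
    (hline.continuous.tendsto' 0 z hline0).eventually hfz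
  have hx0 : f (line 1) = 0 := hanalytic.eqOn_zero_of_preconnected_of_eventuallyEq_zero
    hconvex.isPreconnected (by rwa [mem_preimage, hline0]) hzero (by rwa [mem_preimage, hline1])
  rwa [hline1] at hx0

theorem eqOn_zero_of_isPreconnected_of_eventuallyEq_zero {f : E → F} (hU : IsOpen U)
    (hUc : IsPreconnected U) (hf : DifferentiableOn ℂ f U) {z : E} (hz : z ∈ U)
    (hfz : f =ᶠ[𝓝 z] 0) : EqOn f 0 U := by
  suffices hsub : U ⊆ {x | f =ᶠ[𝓝 x] 0} from fun x hx => (hsub hx).self_of_nhds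
  refine hUc.subset_of_closure_inter_subset isOpen_setOfPred_eventually_nhds ⟨z, hz, hfz⟩ ?_
  rintro c ⟨hc, hcU⟩
  obtain ⟨r, hr, hball⟩ := isOpen_iff.1 hU c hcU
  obtain ⟨w, hw, hcw⟩ := mem_closure_iff.1 hc r hr
  exact (eqOn_zero_of_convex_of_eventuallyEq_zero isOpen_ball (convex_ball c r) (hf.mono hball)
    (mem_ball'.2 hcw) hw).eventuallyEq_of_mem (ball_mem_nhds c hr)

theorem eqOn_zero_of_smul_eqOn_zero {f : E → ℂ} {g : E → G} (hU : IsOpen U)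
    (hUc : IsPreconnected U) (hf : DifferentiableOn ℂ f U) (hf0 : ¬ EqOn f 0 U)
    (hg : ContinuousOn g U) (h : EqOn (f • g) 0 U) : EqOn g 0 U := by
  intro x hx
  by_contra hgx
  refine hf0 (eqOn_zero_of_isPreconnected_of_eventuallyEq_zero hU hUc hf hx ?_)
  filter_upwards [hU.mem_nhds hx, (hg.continuousAt (hU.mem_nhds hx)).eventually_ne hgx]
    with y hy hgy
  exact (smul_eq_zero.1 (h hy)).resolve_right hgy

theorem stmt_5_general {P Q A₂ A₃ : E → ℂ} {v : E} (hU : IsOpen U) (hUc : IsPreconnected U)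
    (hP : DifferentiableOn ℂ P U) (hQ : DifferentiableOn ℂ Q U)
    (hA₂ : DifferentiableOn ℂ A₂ U) (hA₃ : DifferentiableOn ℂ A₃ U)
    (hA₂ne : ¬ ∀ x ∈ U, A₂ x = 0)
    (htan : ∀ x ∈ U, P x * A₂ x + Q x * A₃ x = 0)
    (hint : ∀ x ∈ U, A₃ x * lineDeriv ℂ A₂ x v - A₂ x * lineDeriv ℂ A₃ x v = 0) :
    ∀ x ∈ U, Q x * lineDeriv ℂ P x v - P x * lineDeriv ℂ Q x v = 0 := by
  have hcont : ContinuousOn (fun x => Q x * lineDeriv ℂ P x v - P x * lineDeriv ℂ Q x v) U :=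
    (hQ.continuousOn.mul (continuousOn_lineDeriv_of_differentiableOn hU hP v)).sub
      (hP.continuousOn.mul (continuousOn_lineDeriv_of_differentiableOn hU hQ v))
  refine eqOn_zero_of_smul_eqOn_zero hU hUc hA₂ hA₂ne hcont fun x hx => ?_
  have hasLineDeriv {f : E → ℂ} (hf : DifferentiableOn ℂ f U) :
      HasLineDerivAt ℂ f (lineDeriv ℂ f x v) x v :=
    (hf.differentiableAt (hU.mem_nhds hx)).lineDifferentiableAt.hasLineDerivAt
  have hsq := sq_mul_wronskian_eq_of_mul_add_mul_eventuallyEq_zero (hasLineDeriv hP)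
    (hasLineDeriv hQ) (hasLineDeriv hA₂) (hasLineDeriv hA₃)
    (eventually_of_mem (hU.mem_nhds hx) htan)
  rw [hint x hx, mul_zero, mul_eq_zero, sq_eq_zero_iff] at hsq
  exact mul_eq_zero.2 hsq

end Holomorphic

theorem d1_eq_lineDeriv (f : ℂ × ℂ × ℂ → ℂ) (x : ℂ × ℂ × ℂ) :
    d1 f x = lineDeriv ℂ f x (1, 0, 0) := by
  simpa [d1, lineDeriv, Prod.add_def] using
    (deriv_comp_const_add (f := fun z => f (z, x.2.1, x.2.2)) x.1 0).symm

/-- if an integrable 1-form `ω = (0, A₂, A₃)` annihilates `X_{P,Q}`,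
then `P/Q` does not depend on the first variable. -/
theorem stmt_5 (U : Set (ℂ × ℂ × ℂ)) (hU : IsOpen U) (hUconn : IsConnected U)
    (P Q A₂ A₃ : ℂ × ℂ × ℂ → ℂ)
    (hP : DifferentiableOn ℂ P U) (hQ : DifferentiableOn ℂ Q U)
    (hA₂ : DifferentiableOn ℂ A₂ U) (hA₃ : DifferentiableOn ℂ A₃ U)
    (hQne : ¬ (∀ x ∈ U, Q x = 0))
    (hA₂ne : ¬ (∀ x ∈ U, A₂ x = 0))
    (htan : ∀ x ∈ U, P x * A₂ x + Q x * A₃ x = 0)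
    (hint : ∀ x ∈ U, A₃ x * d1 A₂ x - A₂ x * d1 A₃ x = 0) :
    ∀ x ∈ U, Q x * d1 P x - P x * d1 Q x = 0 := by
  simp only [d1_eq_lineDeriv] at hint ⊢
  exact stmt_5_general hU hUconn.isPreconnected hP hQ hA₂ hA₃ hA₂ne htan hint
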